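/- arXiv:1712.08946 — 2 statements merged into one kernel-verified Lean document; each statement's English description precedes it below -/
import Mathlib

section
/- (Generalized Bayes rule produces a superset of posterior probability measures.) Let Π be a nonempty set of probability measures on a measurable space Ω, and let B be measurable with ℓ(B) > 0. Then: every probability measure Q on Ω satisfying Q(A) ≥ ℓ_D(A|B) for all measurable A also satisfies Q(A) ≥ ℓ_GB(A|B) for all measurable A; and every probability measure Q on Ω satisfying Q(A) ≥ ℓ_G(A|B) for all measurable A also satisfies Q(A) ≥ ℓ_GB(A|B) for all measurable A. That is, Π_D ⊆ Π_GB and Π_G ⊆ Π_GB, where Π_• denotes the set of probability measures dominating the •-rule conditional lower probability given B. -/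
open MeasureTheory

variable {Ω : Type*} [MeasurableSpace Ω]

/-- Lower probability of a set of measures: `ℓ(A) = inf_{P ∈ 𝔓} P(A)`. -/
noncomputable def lowP (𝔓 : Set (Measure Ω)) (A : Set Ω) : ℝ :=
  ⨅ P : 𝔓, (P.1 A).toReal

/-- Upper probability of a set of measures: `u(A) = sup_{P ∈ 𝔓} P(A)`. -/
noncomputable def upP (𝔓 : Set (Measure Ω)) (A : Set Ω) : ℝ :=
  ⨆ P : 𝔓, (P.1 A).toReal

/-- Generalized Bayes conditional lower probability: `ℓ_GB(A|B) = inf_P P(A∩B)/P(B)`. -/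
noncomputable def lowGB (𝔓 : Set (Measure Ω)) (A B : Set Ω) : ℝ :=
  ⨅ P : 𝔓, (P.1 (A ∩ B)).toReal / (P.1 B).toReal

/-- Generalized Bayes conditional upper probability: `u_GB(A|B) = sup_P P(A∩B)/P(B)`. -/
noncomputable def upGB (𝔓 : Set (Measure Ω)) (A B : Set Ω) : ℝ :=
  ⨆ P : 𝔓, (P.1 (A ∩ B)).toReal / (P.1 B).toReal

/-- Dempster conditional upper probability: `u_D(A|B) = u(A∩B)/u(B)`. -/
noncomputable def upD (𝔓 : Set (Measure Ω)) (A B : Set Ω) : ℝ :=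
  upP 𝔓 (A ∩ B) / upP 𝔓 B

/-- Dempster conditional lower probability: `ℓ_D(A|B) = 1 - u_D(Aᶜ|B)`. -/
noncomputable def lowD (𝔓 : Set (Measure Ω)) (A B : Set Ω) : ℝ :=
  1 - upD 𝔓 Aᶜ B

/-- Geometric conditional lower probability: `ℓ_G(A|B) = ℓ(A∩B)/ℓ(B)`. -/
noncomputable def lowG (𝔓 : Set (Measure Ω)) (A B : Set Ω) : ℝ :=
  lowP 𝔓 (A ∩ B) / lowP 𝔓 B

/-- Geometric conditional upper probability: `u_G(A|B) = 1 - ℓ_G(Aᶜ|B)`. -/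
noncomputable def upG (𝔓 : Set (Measure Ω)) (A B : Set Ω) : ℝ :=
  1 - lowG 𝔓 Aᶜ B

/-!
Write `P(A ∩ B) = P(A | B) P(B)` for each `P ∈ 𝔓`. Bounding the first factor below by `ℓ_GB(A | B)`
and the second by `ℓ(B)` gives `ℓ_GB ≤ ℓ_G`; bounding them above by `u_GB(A | B)` and `u(B)` gives
`u_D ≤ u_GB`, which conjugacy turns into `ℓ_GB ≤ ℓ_D`. A larger lower probability is dominated by
fewer measures.
-/

section

variable {𝔓 : Set (Measure Ω)} {A B : Set Ω} {P : Measure Ω}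

theorem real_inter_div_real_le_one (P : Measure Ω) (A B : Set Ω) :
    P.real (A ∩ B) / P.real B ≤ 1 := by
  by_cases hfin : P B = ⊤
  · simp [measureReal_def, hfin]
  · exact div_le_one_of_le₀ (measureReal_mono Set.inter_subset_right hfin) measureReal_nonneg

theorem real_compl_inter_div_real (hA : MeasurableSet A) (hPB : 0 < P.real B) :
    P.real (Aᶜ ∩ B) / P.real B = 1 - P.real (A ∩ B) / P.real B := by
  have hfin : P B ≠ ⊤ := (ENNReal.toReal_pos_iff.1 hPB).2.ne
  have hsplit : P.real (A ∩ B) + P.real (Aᶜ ∩ B) = P.real B := by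
    rw [Set.inter_comm A, Set.inter_comm Aᶜ, ← Set.sdiff_eq]
    exact measureReal_inter_add_sdiff hA hfin
  rw [eq_sub_iff_add_eq', ← add_div, hsplit, div_self hPB.ne']

theorem lowP_le (hP : P ∈ 𝔓) : lowP 𝔓 A ≤ P.real A :=
  ciInf_le (f := fun P : 𝔓 => P.1.real A) ⟨0, Set.forall_mem_range.2 fun _ => measureReal_nonneg⟩
    ⟨P, hP⟩

theorem le_upP (hbdd : BddAbove (Set.range fun P : 𝔓 => P.1.real A)) (hP : P ∈ 𝔓) :
    P.real A ≤ upP 𝔓 A :=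
  le_ciSup hbdd ⟨P, hP⟩

theorem upP_nonneg : 0 ≤ upP 𝔓 A :=
  Real.iSup_nonneg fun _ => measureReal_nonneg

theorem nonempty_of_lowP_pos (hlA : 0 < lowP 𝔓 A) : 𝔓.Nonempty := by
  by_contra hempty
  have : IsEmpty 𝔓 := Set.isEmpty_coe_sort.2 (Set.not_nonempty_iff_eq_empty.1 hempty)
  exact hlA.ne' (Real.iInf_of_isEmpty _)

theorem bddBelow_range_real_inter_div_real (𝔓 : Set (Measure Ω)) (A B : Set Ω) :
    BddBelow (Set.range fun P : 𝔓 => P.1.real (A ∩ B) / P.1.real B) :=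
  ⟨0, Set.forall_mem_range.2 fun _ => div_nonneg measureReal_nonneg measureReal_nonneg⟩

theorem bddAbove_range_real_inter_div_real (𝔓 : Set (Measure Ω)) (A B : Set Ω) :
    BddAbove (Set.range fun P : 𝔓 => P.1.real (A ∩ B) / P.1.real B) :=
  ⟨1, Set.forall_mem_range.2 fun P => real_inter_div_real_le_one P.1 A B⟩

theorem lowGB_nonneg : 0 ≤ lowGB 𝔓 A B :=
  Real.iInf_nonneg fun _ => div_nonneg measureReal_nonneg measureReal_nonneg

theorem upGB_nonneg : 0 ≤ upGB 𝔓 A B :=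
  Real.iSup_nonneg fun _ => div_nonneg measureReal_nonneg measureReal_nonneg

theorem lowGB_mul_real_le (hP : P ∈ 𝔓) : lowGB 𝔓 A B * P.real B ≤ P.real (A ∩ B) :=
  mul_le_of_le_div₀ measureReal_nonneg measureReal_nonneg
    (ciInf_le (bddBelow_range_real_inter_div_real 𝔓 A B) ⟨P, hP⟩)

theorem real_inter_le_upGB_mul (hP : P ∈ 𝔓) (hPB : 0 < P.real B) :
    P.real (A ∩ B) ≤ upGB 𝔓 A B * P.real B :=
  (div_le_iff₀ hPB).1 (le_ciSup (bddAbove_range_real_inter_div_real 𝔓 A B) ⟨P, hP⟩)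

theorem upGB_compl (hne : 𝔓.Nonempty) (hpos : ∀ P ∈ 𝔓, 0 < P.real B) (hA : MeasurableSet A) :
    upGB 𝔓 Aᶜ B = 1 - lowGB 𝔓 A B := by
  have := hne.to_subtype
  calc upGB 𝔓 Aᶜ B = ⨆ P : 𝔓, (1 - P.1.real (A ∩ B) / P.1.real B) :=
        iSup_congr fun P => real_compl_inter_div_real hA (hpos P.1 P.2)
    _ = 1 - lowGB 𝔓 A B :=
        ((OrderIso.subLeft (1 : ℝ)).map_ciInf (bddBelow_range_real_inter_div_real 𝔓 A B)).symm

theorem lowGB_le_lowG (hlB : 0 < lowP 𝔓 B) : lowGB 𝔓 A B ≤ lowG 𝔓 A B := by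
  have := (nonempty_of_lowP_pos hlB).to_subtype
  refine (le_div_iff₀ hlB).2 (le_ciInf fun P => ?_)
  calc lowGB 𝔓 A B * lowP 𝔓 B ≤ lowGB 𝔓 A B * P.1.real B :=
        mul_le_mul_of_nonneg_left (lowP_le P.2) lowGB_nonneg
    _ ≤ P.1.real (A ∩ B) := lowGB_mul_real_le P.2

theorem upD_le_upGB (hpos : ∀ P ∈ 𝔓, 0 < P.real B)
    (hbdd : BddAbove (Set.range fun P : 𝔓 => P.1.real B)) :
    upD 𝔓 A B ≤ upGB 𝔓 A B := by
  refine div_le_of_le_mul₀ upP_nonneg upGB_nonneg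
    (Real.iSup_le (fun P => ?_) (mul_nonneg upGB_nonneg upP_nonneg))
  calc P.1.real (A ∩ B) ≤ upGB 𝔓 A B * P.1.real B := real_inter_le_upGB_mul P.2 (hpos P.1 P.2)
    _ ≤ upGB 𝔓 A B * upP 𝔓 B := mul_le_mul_of_nonneg_left (le_upP hbdd P.2) upGB_nonneg

theorem lowGB_le_lowD (hne : 𝔓.Nonempty) (hpos : ∀ P ∈ 𝔓, 0 < P.real B)
    (hbdd : BddAbove (Set.range fun P : 𝔓 => P.1.real B)) (hA : MeasurableSet A) :
    lowGB 𝔓 A B ≤ lowD 𝔓 A B :=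
  le_sub_comm.1 ((upD_le_upGB hpos hbdd).trans_eq (upGB_compl hne hpos hA))

theorem bddAbove_range_real_of_isProbabilityMeasure (hprob : ∀ P ∈ 𝔓, IsProbabilityMeasure P) :
    BddAbove (Set.range fun P : 𝔓 => P.1.real A) :=
  ⟨1, Set.forall_mem_range.2 fun P => have := hprob P.1 P.2; measureReal_le_one⟩

theorem genBayes_posterior_superset_general
    (hbdd : BddAbove (Set.range fun P : 𝔓 => P.1.real B)) (hlB : 0 < lowP 𝔓 B) (Q : Set Ω → ℝ) :
    ((∀ A, MeasurableSet A → lowD 𝔓 A B ≤ Q A) → ∀ A, MeasurableSet A → lowGB 𝔓 A B ≤ Q A) ∧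
    ((∀ A, MeasurableSet A → lowG 𝔓 A B ≤ Q A) → ∀ A, MeasurableSet A → lowGB 𝔓 A B ≤ Q A) := by
  have hpos : ∀ P ∈ 𝔓, 0 < P.real B := fun P hP => hlB.trans_le (lowP_le hP)
  exact ⟨fun hQ A hA =>
      (lowGB_le_lowD (nonempty_of_lowP_pos hlB) hpos hbdd hA).trans (hQ A hA),
    fun hQ A hA => (lowGB_le_lowG hlB).trans (hQ A hA)⟩

end

/-- Theorem 5.4: the generalized Bayes rule produces a superset of
posterior probability measures: `Π_D ⊆ Π_GB` and `Π_G ⊆ Π_GB`, where `Π_•` is the set of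
probability measures dominating the `•`-rule conditional lower probability given `B`. -/
theorem genBayes_posterior_superset
    (𝔓 : Set (Measure Ω)) (hne : 𝔓.Nonempty)
    (hprob : ∀ P ∈ 𝔓, IsProbabilityMeasure P)
    (B : Set Ω) (hB : MeasurableSet B) (hlB : 0 < lowP 𝔓 B) :
    (∀ Q : Measure Ω, IsProbabilityMeasure Q →
      (∀ A : Set Ω, MeasurableSet A → lowD 𝔓 A B ≤ (Q A).toReal) →
      (∀ A : Set Ω, MeasurableSet A → lowGB 𝔓 A B ≤ (Q A).toReal)) ∧
    (∀ Q : Measure Ω, IsProbabilityMeasure Q →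
      (∀ A : Set Ω, MeasurableSet A → lowG 𝔓 A B ≤ (Q A).toReal) →
      (∀ A : Set Ω, MeasurableSet A → lowGB 𝔓 A B ≤ (Q A).toReal)) := by
  have general := genBayes_posterior_superset_general
    (bddAbove_range_real_of_isProbabilityMeasure hprob) hlB
  exact ⟨fun Q _ => (general Q.real).1, fun Q _ => (general Q.real).2⟩
end

section
/- (Counteraction, first half: Geometric dilation forces Dempster contraction.) Let Π be a nonempty set of probability measures on a measurable space Ω whose lower probability ℓ is 2-monotone, i.e. ℓ(S∪T) + ℓ(S∩T) ≥ ℓ(S) + ℓ(T) for all measurable S, T. Let A, B be measurable with ℓ(B) > 0 and ℓ(Bᶜ) > 0. If the partition {B, Bᶜ} strictly dilates A under the Geometric rule, i.e. for both Z ∈ {B, Bᶜ}: ℓ_G(A|Z) < ℓ(A) and u_G(A|Z) > u(A), then {B, Bᶜ} strictly contracts A under Dempster's rule: for both Z ∈ {B, Bᶜ}: ℓ_D(A|Z) > ℓ(A) and u_D(A|Z) < u(A). -/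
open MeasureTheory

variable {Ω : Type*} [MeasurableSpace Ω]

/-!
Passing to complements turns `ℓ` into `u = 1 - ℓ(·ᶜ)`, so 2-monotonicity of `ℓ` at `S`, `T` reads
`u(Sᶜ ∩ Tᶜ) - u(Sᶜ) u(Tᶜ) ≤ ℓ(S ∩ T) - ℓ(S) ℓ(T)`. The inequality `ℓ_G(S|T) < ℓ(S)` says that the
right-hand side is negative, and `u_D(Sᶜ|Tᶜ) < u(Sᶜ)` says that the left-hand side is. Applied to
`S = A` and `S = Aᶜ`, this turns Geometric dilation by one cell of the partition into Dempster
contraction by the other cell.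
-/

section

variable {𝔓 : Set (Measure Ω)} {A S T Z : Set Ω}

theorem bddBelow_range_toReal_measure (𝔓 : Set (Measure Ω)) (A : Set Ω) :
    BddBelow (Set.range fun P : 𝔓 ↦ (P.1 A).toReal) :=
  ⟨0, Set.forall_mem_range.2 fun _ ↦ ENNReal.toReal_nonneg⟩

theorem bddAbove_range_toReal_measure (hprob : ∀ P ∈ 𝔓, IsProbabilityMeasure P) (A : Set Ω) :
    BddAbove (Set.range fun P : 𝔓 ↦ (P.1 A).toReal) :=
  ⟨1, Set.forall_mem_range.2 fun P ↦
    have := hprob P.1 P.2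
    measureReal_le_one⟩

theorem lowP_le_upP (hne : 𝔓.Nonempty) (hprob : ∀ P ∈ 𝔓, IsProbabilityMeasure P) (A : Set Ω) :
    lowP 𝔓 A ≤ upP 𝔓 A :=
  have := hne.to_subtype
  ciInf_le_ciSup (bddBelow_range_toReal_measure 𝔓 A) (bddAbove_range_toReal_measure hprob A)

theorem upP_compl (hne : 𝔓.Nonempty) (hprob : ∀ P ∈ 𝔓, IsProbabilityMeasure P)
    (hA : MeasurableSet A) : upP 𝔓 Aᶜ = 1 - lowP 𝔓 A := by
  have := hne.to_subtype
  calc upP 𝔓 Aᶜ = ⨆ P : 𝔓, (1 - (P.1 A).toReal) := iSup_congr fun P ↦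
        have := hprob P.1 P.2
        probReal_compl_eq_one_sub hA
    _ = 1 - lowP 𝔓 A :=
        ((OrderIso.subLeft (1 : ℝ)).map_ciInf (bddBelow_range_toReal_measure 𝔓 A)).symm

theorem lowP_compl (hne : 𝔓.Nonempty) (hprob : ∀ P ∈ 𝔓, IsProbabilityMeasure P)
    (hA : MeasurableSet A) : lowP 𝔓 Aᶜ = 1 - upP 𝔓 A := by
  have hcompl := upP_compl hne hprob hA.compl
  rw [compl_compl] at hcompl
  linarith

theorem upP_lt_upG_iff (hne : 𝔓.Nonempty) (hprob : ∀ P ∈ 𝔓, IsProbabilityMeasure P)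
    (hA : MeasurableSet A) : upP 𝔓 A < upG 𝔓 A Z ↔ lowG 𝔓 Aᶜ Z < lowP 𝔓 Aᶜ := by
  rw [upG, lowP_compl hne hprob hA, lt_sub_comm]

theorem lowP_lt_lowD_iff (hne : 𝔓.Nonempty) (hprob : ∀ P ∈ 𝔓, IsProbabilityMeasure P)
    (hA : MeasurableSet A) : lowP 𝔓 A < lowD 𝔓 A Z ↔ upD 𝔓 Aᶜ Z < upP 𝔓 Aᶜ := by
  rw [lowD, upP_compl hne hprob hA, lt_sub_comm]

theorem upP_compl_inter_compl_sub_mul_le (hne : 𝔓.Nonempty)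
    (hprob : ∀ P ∈ 𝔓, IsProbabilityMeasure P) (hS : MeasurableSet S) (hT : MeasurableSet T)
    (hST : lowP 𝔓 S + lowP 𝔓 T ≤ lowP 𝔓 (S ∪ T) + lowP 𝔓 (S ∩ T)) :
    upP 𝔓 (Sᶜ ∩ Tᶜ) - upP 𝔓 Sᶜ * upP 𝔓 Tᶜ ≤ lowP 𝔓 (S ∩ T) - lowP 𝔓 S * lowP 𝔓 T := by
  rw [← Set.compl_union, upP_compl hne hprob (hS.union hT), upP_compl hne hprob hS,
    upP_compl hne hprob hT]
  linarith

theorem upD_compl_compl_lt_upP_compl (hne : 𝔓.Nonempty)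
    (hprob : ∀ P ∈ 𝔓, IsProbabilityMeasure P) (hS : MeasurableSet S) (hT : MeasurableSet T)
    (hST : lowP 𝔓 S + lowP 𝔓 T ≤ lowP 𝔓 (S ∪ T) + lowP 𝔓 (S ∩ T))
    (hlT : 0 < lowP 𝔓 T) (huTc : 0 < upP 𝔓 Tᶜ) (hG : lowG 𝔓 S T < lowP 𝔓 S) :
    upD 𝔓 Sᶜ Tᶜ < upP 𝔓 Sᶜ := by
  rw [lowG, div_lt_iff₀ hlT] at hG
  rw [upD, div_lt_iff₀ huTc]
  linarith [upP_compl_inter_compl_sub_mul_le hne hprob hS hT hST]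

theorem dempster_contraction_compl_of_geometric_dilation (hne : 𝔓.Nonempty)
    (hprob : ∀ P ∈ 𝔓, IsProbabilityMeasure P) (hA : MeasurableSet A) (hZ : MeasurableSet Z)
    (hAZ : lowP 𝔓 A + lowP 𝔓 Z ≤ lowP 𝔓 (A ∪ Z) + lowP 𝔓 (A ∩ Z))
    (hAcZ : lowP 𝔓 Aᶜ + lowP 𝔓 Z ≤ lowP 𝔓 (Aᶜ ∪ Z) + lowP 𝔓 (Aᶜ ∩ Z))
    (hlZ : 0 < lowP 𝔓 Z) (huZc : 0 < upP 𝔓 Zᶜ)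
    (hdil : lowG 𝔓 A Z < lowP 𝔓 A ∧ upP 𝔓 A < upG 𝔓 A Z) :
    lowP 𝔓 A < lowD 𝔓 A Zᶜ ∧ upD 𝔓 A Zᶜ < upP 𝔓 A := by
  constructor
  · rw [lowP_lt_lowD_iff hne hprob hA]
    exact upD_compl_compl_lt_upP_compl hne hprob hA hZ hAZ hlZ huZc hdil.1
  · have hG : lowG 𝔓 Aᶜ Z < lowP 𝔓 Aᶜ := (upP_lt_upG_iff hne hprob hA).1 hdil.2
    simpa only [compl_compl] using
      upD_compl_compl_lt_upP_compl hne hprob hA.compl hZ hAcZ hlZ huZc hG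

end

/-- Theorem 5.9, first half: if `ℓ` is 2-monotone and the binary
partition `{B, Bᶜ}` strictly dilates `A` under the Geometric rule, then it strictly
contracts `A` under Dempster's rule. -/
theorem geometric_dilation_forces_dempster_contraction
    (𝔓 : Set (Measure Ω)) (hne : 𝔓.Nonempty)
    (hprob : ∀ P ∈ 𝔓, IsProbabilityMeasure P)
    (h2mono : ∀ S T : Set Ω, MeasurableSet S → MeasurableSet T →
      lowP 𝔓 S + lowP 𝔓 T ≤ lowP 𝔓 (S ∪ T) + lowP 𝔓 (S ∩ T))
    (A B : Set Ω) (hA : MeasurableSet A) (hB : MeasurableSet B)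
    (hlB : 0 < lowP 𝔓 B) (hlBc : 0 < lowP 𝔓 Bᶜ)
    (hdil : ∀ Z ∈ ({B, Bᶜ} : Set (Set Ω)),
      lowG 𝔓 A Z < lowP 𝔓 A ∧ upP 𝔓 A < upG 𝔓 A Z) :
    ∀ Z ∈ ({B, Bᶜ} : Set (Set Ω)),
      lowP 𝔓 A < lowD 𝔓 A Z ∧ upD 𝔓 A Z < upP 𝔓 A := by
  have contraction_compl {Z : Set Ω} (hZ : MeasurableSet Z) (hlZ : 0 < lowP 𝔓 Z)
      (hlZc : 0 < lowP 𝔓 Zᶜ) (hdilZ : lowG 𝔓 A Z < lowP 𝔓 A ∧ upP 𝔓 A < upG 𝔓 A Z) :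
      lowP 𝔓 A < lowD 𝔓 A Zᶜ ∧ upD 𝔓 A Zᶜ < upP 𝔓 A :=
    dempster_contraction_compl_of_geometric_dilation hne hprob hA hZ (h2mono A Z hA hZ)
      (h2mono Aᶜ Z hA.compl hZ) hlZ (hlZc.trans_le (lowP_le_upP hne hprob Zᶜ)) hdilZ
  rintro Z (rfl | rfl)
  · simpa only [compl_compl] using
      contraction_compl hB.compl hlBc (by rwa [compl_compl]) (hdil Zᶜ (.inr rfl))
  · exact contraction_compl hB hlB hlBc (hdil B (.inl rfl))
end
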